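/- If a is a 4×4 orthogonal matrix with determinant 1 (a ∈ SO(4,K)), then its second compound matrix m₂(a) is a 6×6 orthogonal matrix with determinant 1 (m₂(a) ∈ SO(6,K)). -/

import Mathlib

open Matrix

def pr : Fin 6 → Fin 4 × Fin 4
  | 0 => (0, 1)
  | 1 => (0, 2)
  | 2 => (0, 3)
  | 3 => (1, 2)
  | 4 => (1, 3)
  | 5 => (2, 3)

/-- The 2×2 minor of `a` on rows `r.1 < r.2` and columns `c.1 < c.2`. -/
def minor2 {K : Type*} [CommRing K] (a : Matrix (Fin 4) (Fin 4) K)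
    (r c : Fin 4 × Fin 4) : K :=
  (a.submatrix ![r.1, r.2] ![c.1, c.2]).det

/-- The second compound matrix of a 4×4 matrix: the 6×6 matrix of 2×2 minors,
rows and columns indexed by the 2-element index pairs in lexicographic order. -/
def m2 {K : Type*} [CommRing K] (a : Matrix (Fin 4) (Fin 4) K) :
    Matrix (Fin 6) (Fin 6) K :=
  fun i j => minor2 a (pr i) (pr j)


lemma m2_apply_aux {K : Type*} [CommRing K] (a : Matrix (Fin 4) (Fin 4) K) (i j : Fin 6) :
    m2 a i j = a (pr i).1 (pr j).1 * a (pr i).2 (pr j).2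
      - a (pr i).1 (pr j).2 * a (pr i).2 (pr j).1 := by
  rw [m2, minor2, Matrix.det_fin_two]
  rfl

lemma m2_mul_aux {K : Type*} [CommRing K] (a b : Matrix (Fin 4) (Fin 4) K) :
    m2 (a * b) = m2 a * m2 b := by
  ext i j
  rw [Matrix.mul_apply]
  simp only [m2_apply_aux, Matrix.mul_apply, Fin.sum_univ_succ, Fin.sum_univ_zero]
  simp [pr]
  ring

lemma m2_transpose_aux {K : Type*} [CommRing K] (a : Matrix (Fin 4) (Fin 4) K) :
    m2 aᵀ = (m2 a)ᵀ := by
  ext i j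
  simp only [m2_apply_aux, Matrix.transpose_apply]
  ring

lemma m2_diagonal_aux {K : Type*} [CommRing K] (d : Fin 4 → K) :
    m2 (diagonal d) = diagonal (fun i => d (pr i).1 * d (pr i).2) := by
  ext i j
  rw [m2_apply_aux]
  fin_cases i <;> fin_cases j <;> simp [pr]

lemma m2_one_aux {K : Type*} [CommRing K] :
    m2 (1 : Matrix (Fin 4) (Fin 4) K) = 1 := by
  rw [← diagonal_one, m2_diagonal_aux]
  simp

/-- The compound of an upper triangular matrix is upper triangular. -/
lemma m2_det_upper_aux {K : Type*} [CommRing K] (a : Matrix (Fin 4) (Fin 4) K)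
    (h : ∀ i j, j < i → a i j = 0) : (m2 a).det = a.det ^ 3 := by
  rw [Matrix.det_of_isUpperTriangular (M := a) (fun i j hij => h i j hij),
    Matrix.det_of_isUpperTriangular (M := m2 a)]
  · have h10 := h 1 0 (by decide)
    have h20 := h 2 0 (by decide)
    have h30 := h 3 0 (by decide)
    have h21 := h 2 1 (by decide)
    have h31 := h 3 1 (by decide)
    have h32 := h 3 2 (by decide)
    simp only [m2_apply_aux, Fin.prod_univ_succ, Fin.prod_univ_zero]
    simp [pr, h10, h20, h30, h21, h31, h32]
    ring
  · intro i j hij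
    have h10 := h 1 0 (by decide)
    have h20 := h 2 0 (by decide)
    have h30 := h 3 0 (by decide)
    have h21 := h 2 1 (by decide)
    have h31 := h 3 1 (by decide)
    have h32 := h 3 2 (by decide)
    rw [m2_apply_aux]
    fin_cases i <;> fin_cases j <;>
      first
      | exact absurd hij (by decide)
      | simp [pr, h10, h20, h30, h21, h31, h32]

lemma m2_det_aux {K : Type*} [Field K] (a : Matrix (Fin 4) (Fin 4) K) :
    (m2 a).det = a.det ^ 3 := by
  refine Matrix.diagonal_transvection_induction (fun a => (m2 a).det = a.det ^ 3) a ?_ ?_ ?_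
  · intro d _
    exact m2_det_upper_aux _ fun i j hij => diagonal_apply_ne _ hij.ne'
  · rintro ⟨i, j, hij, c⟩
    have key : ∀ i j : Fin 4, i < j → ∀ k l, l < k → transvection i j c k l = 0 := by
      intro i j hij k l hkl
      rw [transvection, Matrix.add_apply, one_apply_ne hkl.ne', single_apply, if_neg, add_zero]
      rintro ⟨rfl, rfl⟩
      exact lt_asymm hij hkl
    rcases lt_or_gt_of_ne hij with h | h
    · exact m2_det_upper_aux _ (key i j h)
    · have ht : transvection i j c = (transvection j i c)ᵀ := by
        simp [transvection]
      change (m2 (transvection i j c)).det = (transvection i j c).det ^ 3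
      rw [ht, m2_transpose_aux, det_transpose, det_transpose]
      exact m2_det_upper_aux _ (key j i h)
  · intro a b ha hb
    rw [m2_mul_aux, det_mul, det_mul, ha, hb, mul_pow]

/-- If a ∈ SO(4,K) then m₂(a) ∈ SO(6,K). -/
theorem m2_mem_SO {K : Type*} [Field K] (a : Matrix (Fin 4) (Fin 4) K)
    (horth : aᵀ * a = 1) (hdet : a.det = 1) :
    (m2 a)ᵀ * m2 a = 1 ∧ (m2 a).det = 1 := by
  refine ⟨?_, ?_⟩
  · rw [← m2_transpose_aux, ← m2_mul_aux, horth, m2_one_aux]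
  · rw [m2_det_aux, hdet, one_pow]
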